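/- arXiv:2205.14343 — 2 statements merged into one kernel-verified Lean document; each statement's English description precedes it below -/
import Mathlib

section
/- Let M be a magma whose binary operation * satisfies the identities (x*y)*z = x*y and x*(y*z) = x*y for all x,y,z (the variety L₅). Then M satisfies the identities x*y = x*z and (x*y)*z = x*y for all x,y,z (the variety U) if and only if M avoids the 4-element magma P with Cayley table on {0,1,2,3} (rows indexed by left factor): row 0 = (2,3,2,2), row 1 = (1,1,1,1), row 2 = (2,2,2,2), row 3 = (3,3,3,3). -/
/-!
In `L₅` every product is a left zero and `a * (x * y) = a * x`. If `a * b ≠ a * a` for some `a` and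
`b`, then `a` is not a left zero, so it differs from every product, while left multiplication by `a`
separates `b * b` from both `a * a` and `a * b`. Hence `a`, `b * b`, `a * a`, `a * b` are distinct,
and they form a copy of `P`.
-/

section LeftZero

variable {M : Type*} {f : M → M → M}

/-- An element `e` is a left zero of the operation `f` if its row in the Cayley table is constantly
`e`. Such elements are the last three rows of `P`, and they include every product in `L₅`. -/
def IsLeftZero (f : M → M → M) (e : M) : Prop :=
  ∀ x, f e x = e

theorem IsLeftZero.ne_of_apply_ne_apply {e a x y : M} (he : IsLeftZero f e)
    (h : f a x ≠ f a y) : a ≠ e := by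
  rintro rfl
  exact h ((he x).trans (he y).symm)

theorem apply_ne_apply_of_left_apply_ne (hf : ∀ x y z, f x (f y z) = f x y) {a x y : M}
    (h : f a x ≠ f a y) (z w : M) : f x z ≠ f y w := by
  intro hxy
  apply h
  calc
    f a x = f a (f x z) := (hf a x z).symm
    _ = f a (f y w) := congrArg (f a) hxy
    _ = f a y := hf a y w

end LeftZero

theorem stmt_14 {M : Type*} (f : M → M → M)
    (hL5a : ∀ x y z : M, f (f x y) z = f x y)
    (hL5b : ∀ x y z : M, f x (f y z) = f x y)
    :
    ((∀ x y z : M, f x y = f x z) ∧ (∀ x y z : M, f (f x y) z = f x y)) ↔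
      (¬ ∃ a0 a1 a2 a3 : M, a0 ≠ a1 ∧ a0 ≠ a2 ∧ a0 ≠ a3 ∧ a1 ≠ a2 ∧ a1 ≠ a3 ∧ a2 ≠ a3 ∧ f a0 a0 = a2 ∧ f a0 a1 = a3 ∧ f a0 a2 = a2 ∧ f a0 a3 = a2 ∧ f a1 a0 = a1 ∧ f a1 a1 = a1 ∧ f a1 a2 = a1 ∧ f a1 a3 = a1 ∧ f a2 a0 = a2 ∧ f a2 a1 = a2 ∧ f a2 a2 = a2 ∧ f a2 a3 = a2 ∧ f a3 a0 = a3 ∧ f a3 a1 = a3 ∧ f a3 a2 = a3 ∧ f a3 a3 = a3) := by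
  constructor
  · rintro ⟨hconst, -⟩ ⟨a0, a1, a2, a3, -, -, -, -, -, h23, h00, h01, -⟩
    exact h23 (h00.symm.trans ((hconst a0 a0 a1).trans h01))
  · intro havoid
    suffices hdiag : ∀ a b, f a b = f a a from
      ⟨fun x y z => (hdiag x y).trans (hdiag x z).symm, hL5a⟩
    intro a b
    by_contra hab
    have left_zero (x y : M) : IsLeftZero f (f x y) := hL5a x y
    have ne_product (x y : M) : a ≠ f x y := (left_zero x y).ne_of_apply_ne_apply hab
    have separated (y : M) : f b b ≠ f a y := apply_ne_apply_of_left_apply_ne hL5b hab b y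
    exact havoid ⟨a, f b b, f a a, f a b, ne_product b b, ne_product a a, ne_product a b,
      separated a, separated b, Ne.symm hab, by simp only [hL5a, hL5b, and_self]⟩
end

section
/- Let M be a magma whose binary operation * satisfies the identities (x*y)*z = x*z and x*(y*z) = x*y for all x,y,z (the variety L₆). Then M satisfies the identities x*y = x*z and (x*y)*z = x*y for all x,y,z (the variety U) if and only if M avoids both the 3-element magma M₁ with Cayley table on {0,1,2} (rows indexed by left factor) row 0 = (0,2,0), row 1 = (1,1,1), row 2 = (0,2,0), and the 4-element magma M₂ with Cayley table on {0,1,2,3} given by row 0 = (0,2,0,2), row 1 = (1,3,1,3), row 2 = (0,2,0,2), row 3 = (1,3,1,3). -/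
/-!
The identity `x * (y * z) = x * y` makes right multiplication by `y` depend only on the row of `y`:
as soon as `y * u = z * v`, one has `x * y = x * z`. A non-constant row gives `x * x ≠ x * w` for
some `x` and `w`. Then no value in the row of `x` is a value in the row of `w`, and by
`(x * y) * z = x * z` and `x * (y * z) = x * y` the products of `x` and `w` are closed under `*`.
They form a copy of `M₁` if `w * x = w * w` and of `M₂` otherwise.
-/

/-- The magma `(M, f)` contains a copy of the magma `(X, t)`. For finite `X`, the elements of `X`
index the Cayley table `t`. -/
def ContainsCopy {M X : Type*} (f : M → M → M) (t : X → X → X) : Prop :=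
  ∃ a : X → M, a.Injective ∧ ∀ i j, f (a i) (a j) = a (t i j)

/-- The Cayley table of the forbidden magma `M₁`, rows indexed by the left factor. -/
def table₁ : Fin 3 → Fin 3 → Fin 3 :=
  ![![0, 2, 0], ![1, 1, 1], ![0, 2, 0]]

/-- The Cayley table of the forbidden magma `M₂`, rows indexed by the left factor. -/
def table₂ : Fin 4 → Fin 4 → Fin 4 :=
  ![![0, 2, 0, 2], ![1, 3, 1, 3], ![0, 2, 0, 2], ![1, 3, 1, 3]]

section

variable {M : Type*} {f : M → M → M}

theorem injective_vecCons_iff {n : ℕ} {x : M} {v : Fin n → M} :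
    (Matrix.vecCons x v).Injective ↔ (∀ i, x ≠ v i) ∧ v.Injective := by
  simp only [Matrix.vecCons, Fin.cons_injective_iff, Set.mem_range, not_exists,
    ne_comm (a := x), ne_eq]

theorem containsCopy_table₁_iff :
    ContainsCopy f table₁ ↔ ∃ a0 a1 a2 : M, a0 ≠ a1 ∧ a0 ≠ a2 ∧ a1 ≠ a2 ∧
      f a0 a0 = a0 ∧ f a0 a1 = a2 ∧ f a0 a2 = a0 ∧
      f a1 a0 = a1 ∧ f a1 a1 = a1 ∧ f a1 a2 = a1 ∧
      f a2 a0 = a0 ∧ f a2 a1 = a2 ∧ f a2 a2 = a0 := by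
  rw [ContainsCopy, ← FinVec.exists_iff]
  simp [FinVec.Exists, table₁, injective_vecCons_iff, Fin.forall_fin_succ,
    Function.injective_of_subsingleton, and_assoc, -existsAndEq]

theorem containsCopy_table₂_iff :
    ContainsCopy f table₂ ↔ ∃ a0 a1 a2 a3 : M,
      a0 ≠ a1 ∧ a0 ≠ a2 ∧ a0 ≠ a3 ∧ a1 ≠ a2 ∧ a1 ≠ a3 ∧ a2 ≠ a3 ∧
      f a0 a0 = a0 ∧ f a0 a1 = a2 ∧ f a0 a2 = a0 ∧ f a0 a3 = a2 ∧
      f a1 a0 = a1 ∧ f a1 a1 = a3 ∧ f a1 a2 = a1 ∧ f a1 a3 = a3 ∧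
      f a2 a0 = a0 ∧ f a2 a1 = a2 ∧ f a2 a2 = a0 ∧ f a2 a3 = a2 ∧
      f a3 a0 = a1 ∧ f a3 a1 = a3 ∧ f a3 a2 = a1 ∧ f a3 a3 = a3 := by
  rw [ContainsCopy, ← FinVec.exists_iff]
  simp [FinVec.Exists, table₂, injective_vecCons_iff, Fin.forall_fin_succ,
    Function.injective_of_subsingleton, and_assoc, -existsAndEq]

theorem ContainsCopy.forall_op_eq {X : Type*} {t : X → X → X} (ht : ContainsCopy f t)
    (h : ∀ x y z, f x y = f x z) (i j k : X) : t i j = t i k := by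
  obtain ⟨a, ha, hat⟩ := ht
  apply ha
  rw [← hat, ← hat, h]

theorem op_right_congr (hb : ∀ x y z, f x (f y z) = f x y) {y z u v : M}
    (h : f y u = f z v) (x : M) : f x y = f x z :=
  calc
    f x y = f x (f y u) := (hb x y u).symm
    _ = f x (f z v) := by rw [h]
    _ = f x z := hb x z v

theorem op_ne_op_of_op_right_ne (hb : ∀ x y z, f x (f y z) = f x y) {x y z : M}
    (h : f x y ≠ f x z) (u v : M) : f y u ≠ f z v :=
  fun huv ↦ h (op_right_congr hb huv x)

theorem containsCopy_table₁_of_eq (ha : ∀ x y z, f (f x y) z = f x z)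
    (hb : ∀ x y z, f x (f y z) = f x y) {x w : M} (hx : f x x ≠ f x w) (hw : f w x = f w w) :
    ContainsCopy f table₁ := by
  have rows_ne := op_ne_op_of_op_right_ne hb hx
  refine containsCopy_table₁_iff.2 ⟨f x x, f w w, f x w, rows_ne _ _, hx, (rows_ne _ _).symm, ?_⟩
  simp only [ha, hb, hw, and_self]

theorem containsCopy_table₂_of_ne (ha : ∀ x y z, f (f x y) z = f x z)
    (hb : ∀ x y z, f x (f y z) = f x y) {x w : M} (hx : f x x ≠ f x w) (hw : f w x ≠ f w w) :
    ContainsCopy f table₂ := by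
  have rows_ne := op_ne_op_of_op_right_ne hb hx
  refine containsCopy_table₂_iff.2
    ⟨f x x, f w x, f x w, f w w,
      rows_ne _ _, hx, rows_ne _ _, (rows_ne _ _).symm, hw, rows_ne _ _, ?_⟩
  simp only [ha, hb, and_self]

theorem forall_op_eq_iff_not_containsCopy (ha : ∀ x y z, f (f x y) z = f x z)
    (hb : ∀ x y z, f x (f y z) = f x y) :
    (∀ x y z, f x y = f x z) ↔ ¬ ContainsCopy f table₁ ∧ ¬ ContainsCopy f table₂ := by
  constructor
  · intro h
    exact ⟨fun h₁ ↦ absurd (h₁.forall_op_eq h 0 0 1) (by decide),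
      fun h₂ ↦ absurd (h₂.forall_op_eq h 0 0 1) (by decide)⟩
  · rintro ⟨h₁, h₂⟩
    have op_self (x w : M) : f x x = f x w := by
      by_contra hx
      by_cases hw : f w x = f w w
      · exact h₁ (containsCopy_table₁_of_eq ha hb hx hw)
      · exact h₂ (containsCopy_table₂_of_ne ha hb hx hw)
    exact fun x y z ↦ (op_self x y).symm.trans (op_self x z)

end

theorem stmt_15 {M : Type*} (f : M → M → M)
    (hL6a : ∀ x y z : M, f (f x y) z = f x z)
    (hL6b : ∀ x y z : M, f x (f y z) = f x y)
    :
    ((∀ x y z : M, f x y = f x z) ∧ (∀ x y z : M, f (f x y) z = f x y)) ↔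
      (¬ ∃ a0 a1 a2 : M, a0 ≠ a1 ∧ a0 ≠ a2 ∧ a1 ≠ a2 ∧ f a0 a0 = a0 ∧ f a0 a1 = a2 ∧ f a0 a2 = a0 ∧ f a1 a0 = a1 ∧ f a1 a1 = a1 ∧ f a1 a2 = a1 ∧ f a2 a0 = a0 ∧ f a2 a1 = a2 ∧ f a2 a2 = a0) ∧
      (¬ ∃ a0 a1 a2 a3 : M, a0 ≠ a1 ∧ a0 ≠ a2 ∧ a0 ≠ a3 ∧ a1 ≠ a2 ∧ a1 ≠ a3 ∧ a2 ≠ a3 ∧ f a0 a0 = a0 ∧ f a0 a1 = a2 ∧ f a0 a2 = a0 ∧ f a0 a3 = a2 ∧ f a1 a0 = a1 ∧ f a1 a1 = a3 ∧ f a1 a2 = a1 ∧ f a1 a3 = a3 ∧ f a2 a0 = a0 ∧ f a2 a1 = a2 ∧ f a2 a2 = a0 ∧ f a2 a3 = a2 ∧ f a3 a0 = a1 ∧ f a3 a1 = a3 ∧ f a3 a2 = a1 ∧ f a3 a3 = a3) := by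
  rw [← containsCopy_table₁_iff, ← containsCopy_table₂_iff,
    ← forall_op_eq_iff_not_containsCopy hL6a hL6b]
  exact and_iff_left_of_imp fun h x y z ↦ (hL6a x y z).trans (h x z y)
end
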